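/- Let δ ≥ 7 be an integer, let 𝐮 be the standard sequence over {a, b} whose slope has continued fraction expansion θ = [0, 1, ⌊δ/2⌋, 1, 1, 1, …] (partial quotients a₁ = 1, a₂ = ⌊δ/2⌋, and aₙ = 1 for all n ≥ 3), and let 𝐱_{2δ} = colour(𝐮, (12⋯δ)^ω, (1′2′⋯δ′)^ω). If w is a bispecial factor of 𝐱_{2δ} such that π(w) contains both a and b, then |w|/|v| < 1/(2δ−2) for every return word v to w in 𝐱_{2δ}. -/

import Mathlib

open Filter
open scoped ENNReal

namespace BalancedCE

variable {α : Type*} {β : Type*}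

/-- The factor of `v` of length `n` starting at position `i`. -/
def factorAt (v : ℕ → α) (i n : ℕ) : List α := (List.range n).map fun k => v (i + k)

/-- `u` is a factor of the sequence `v`. -/
def IsFactor (v : ℕ → α) (u : List α) : Prop := ∃ i, factorAt v i u.length = u

/-- The word `w` occurs in the sequence `v` at position `i`. -/
def OccursAt (v : ℕ → α) (w : List α) (i : ℕ) : Prop := factorAt v i w.length = w

/-- A sequence is balanced if counts of each letter in equal-length factors differ by at most 1. -/
def Balanced [DecidableEq α] (v : ℕ → α) : Prop :=
  ∀ (a : α) (u w : List α), IsFactor v u → IsFactor v w → u.length = w.length →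
    |(u.count a : ℤ) - (w.count a : ℤ)| ≤ 1

def EventuallyPeriodic (v : ℕ → α) : Prop :=
  ∃ p, 0 < p ∧ ∃ N, ∀ n, N ≤ n → v (n + p) = v n

def Recurrent (v : ℕ → α) : Prop :=
  ∀ u : List α, IsFactor v u → ∀ N : ℕ, ∃ i, N ≤ i ∧ OccursAt v u i

/-- `i < j` are consecutive occurrences of the letter `a` in `v`. -/
def ConsecOcc (v : ℕ → α) (a : α) (i j : ℕ) : Prop :=
  i < j ∧ v i = a ∧ v j = a ∧ ∀ k, i < k → k < j → v k ≠ a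

/-- `p` is a period of the finite word `z` (i.e. `z` is a prefix of `u^ω` with `|u| = p`). -/
def IsPeriod (z : List α) (p : ℕ) : Prop :=
  0 < p ∧ ∀ i, i + p < z.length → z[i]? = z[i + p]?

/-- The minimal period of a finite word. -/
noncomputable def minPeriod (z : List α) : ℕ := sInf {p | IsPeriod z p}

/-- The exponent of a finite word: its length divided by its minimal period. -/
noncomputable def expE (z : List α) : ℝ≥0∞ := (z.length : ℝ≥0∞) / (minPeriod z : ℝ≥0∞)

/-- The critical exponent of a sequence: the supremum of exponents of nonempty factors. -/
noncomputable def criticalExponent (v : ℕ → α) : ℝ≥0∞ :=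
  ⨆ (z : List α) (_ : IsFactor v z ∧ z ≠ []), expE z

/-- A Pansiot sequence over a `d`-letter alphabet. -/
def Pansiot (d : ℕ) (v : ℕ → α) : Prop :=
  (∀ i : ℕ, (factorAt v i (d - 1)).Nodup) ∧
  ∀ (a : α) (i j : ℕ), ConsecOcc v a i j → v (i + 1) ≠ v (j + 1)

/-- The letter `a` has frequency `ρ` in the sequence `v`. -/
def HasFreq [DecidableEq α] (v : ℕ → α) (a : α) (ρ : ℝ) : Prop :=
  Tendsto (fun n => ((factorAt v 0 n).count a : ℝ) / n) atTop (nhds ρ)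

/-- Factor complexity of a sequence. -/
noncomputable def complexity (v : ℕ → α) (n : ℕ) : ℕ :=
  Set.ncard {u : List α | IsFactor v u ∧ u.length = n}

/-- Sturmian sequences: aperiodic binary sequences of factor complexity `n + 1`.
Convention: the letter `a` is `false`, the letter `b` is `true`. -/
def Sturmian (u : ℕ → Bool) : Prop :=
  ¬ EventuallyPeriodic u ∧ ∀ n, complexity u n = n + 1

/-- Prepending a letter to a sequence. -/
def consSeq (c : α) (v : ℕ → α) : ℕ → α := fun n =>
  match n with
  | 0 => c
  | Nat.succ m => v m

/-- A standard sequence: a Sturmian sequence `u` such that `a·u` and `b·u` are Sturmian. -/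
def IsStandard (u : ℕ → Bool) : Prop :=
  Sturmian u ∧ Sturmian (consSeq false u) ∧ Sturmian (consSeq true u)

/-- The slope of a binary sequence, with the convention `ρ_b > ρ_a` (`a = false`, `b = true`). -/
def HasSlope (u : ℕ → Bool) (θ : ℝ) : Prop :=
  ∃ ρa ρb : ℝ, HasFreq u false ρa ∧ HasFreq u true ρb ∧ ρa < ρb ∧ θ = ρa / ρb

/-- `θ` has the (infinite) continued fraction expansion `[0; a 1, a 2, a 3, …]`:
there are complete quotients' fractional parts `t n ∈ (0,1)` with `t 0 = θ` and
`1 / t n = a (n+1) + t (n+1)` for all `n`. (The value `a 0` is irrelevant.) -/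
def HasCF (θ : ℝ) (a : ℕ → ℕ) : Prop :=
  ∃ t : ℕ → ℝ, t 0 = θ ∧ ∀ n, 0 < t n ∧ t n < 1 ∧ 1 / t n = (a (n + 1) : ℝ) + t (n + 1)

/-- Number of positions `< n` where `u` takes the value `c`. -/
def countBefore (u : ℕ → Bool) (c : Bool) (n : ℕ) : ℕ :=
  ((List.range n).filter fun i => u i = c).length

/-- The colouring of a binary sequence `u` by `y` (on the `a = false` positions)
and `y'` (on the `b = true` positions). -/
def colour (u : ℕ → Bool) (y : ℕ → α) (y' : ℕ → β) : ℕ → α ⊕ β := fun n =>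
  if u n = false then Sum.inl (y (countBefore u false n))
  else Sum.inr (y' (countBefore u true n))

/-- A constant gap sequence: periodic, and consecutive occurrences of each occurring
letter are at a constant distance. -/
def ConstantGap (y : ℕ → α) : Prop :=
  (∃ p, 0 < p ∧ ∀ n, y (n + p) = y n) ∧
  ∀ c : α, (∃ i, y i = c) → ∃ g, 0 < g ∧ ∀ i j, ConsecOcc y c i j → j - i = g

/-- The discolouration (projection) map: letters of the first alphabet go to `a = false`,
letters of the second alphabet go to `b = true`. -/
def proj : α ⊕ β → Bool := Sum.elim (fun _ => false) (fun _ => true)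

/-- `v` is a return word to `w` in the sequence `z`. -/
def IsReturnWord (z : ℕ → α) (w v : List α) : Prop :=
  ∃ i j : ℕ, i < j ∧ OccursAt z w i ∧ OccursAt z w j ∧
    (∀ k, i < k → k < j → ¬ OccursAt z w k) ∧ v = factorAt z i (j - i)

def RightSpecial (z : ℕ → α) (w : List α) : Prop :=
  ∃ a b : α, a ≠ b ∧ IsFactor z (w ++ [a]) ∧ IsFactor z (w ++ [b])

def LeftSpecial (z : ℕ → α) (w : List α) : Prop :=
  ∃ a b : α, a ≠ b ∧ IsFactor z (a :: w) ∧ IsFactor z (b :: w)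

def Bispecial (z : ℕ → α) (w : List α) : Prop := LeftSpecial z w ∧ RightSpecial z w

/-- `o` enumerates, in increasing order, all occurrences of `w` in `z`. -/
def IsOccEnum (z : ℕ → α) (w : List α) (o : ℕ → ℕ) : Prop :=
  StrictMono o ∧ (∀ n, OccursAt z w (o n)) ∧ ∀ i, OccursAt z w i → ∃ n, o n = i

/-- The derived sequence of `z` with respect to the occurrence enumeration `o` of a factor:
its `n`-th letter is the return word between the `n`-th and `(n+1)`-st occurrences. -/
def derivedSeq (z : ℕ → α) (o : ℕ → ℕ) : ℕ → List α :=
  fun n => factorAt z (o n) (o (n + 1) - o n)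

/-- The slope of a sequence over a two-letter alphabet:
the ratio of the smaller letter frequency to the larger one. -/
def HasSlope2 {γ : Type*} [DecidableEq γ] (z : ℕ → γ) (θ : ℝ) : Prop :=
  ∃ (c c' : γ) (ρ ρ' : ℝ), c ≠ c' ∧ (∀ n, z n = c ∨ z n = c') ∧
    HasFreq z c ρ ∧ HasFreq z c' ρ' ∧ ρ < ρ' ∧ θ = ρ / ρ'

/-- The purely cyclic constant gap sequence `(0 1 ⋯ (δ-1))^ω` over `ZMod δ`. -/
def cyc (δ : ℕ) : ℕ → ZMod δ := fun n => (n : ZMod δ)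

/-- The colouring `colour(u, (1 2 ⋯ δ)^ω, (1' 2' ⋯ δ')^ω)` over `2δ` letters. -/
def colourCyc (δ : ℕ) (u : ℕ → Bool) : ℕ → ZMod δ ⊕ ZMod δ := colour u (cyc δ) (cyc δ)



/-- Denominators of the convergents. -/
def Qs (m : ℤ) : ℕ → ℤ
  | 0 => 2
  | 1 => 2 * m + 1
  | (l + 2) => Qs m (l + 1) + Qs m l

/-- Numerators of the convergents. -/
def Ps (m : ℤ) : ℕ → ℤ
  | 0 => 1
  | 1 => m
  | (l + 2) => Ps m (l + 1) + Ps m l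

lemma Qs_pos (m : ℤ) (hm : 1 ≤ m) : ∀ l, 2 ≤ Qs m l ∧ 2 ≤ Qs m (l + 1)
  | 0 => by simp only [Qs]; omega
  | (l + 1) => by
    have := Qs_pos m hm l
    refine ⟨this.2, ?_⟩
    simp only [Qs]; omega

lemma Qs_grow (m : ℤ) (hm : 1 ≤ m) (l : ℕ) : (l : ℤ) ≤ Qs m l := by
  induction l using Nat.strong_induction_on with
  | _ l ih =>
    match l with
    | 0 => simp [Qs]
    | 1 => simp [Qs]; omega
    | (k + 2) =>
      have h1 := ih (k + 1) (by omega)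
      have h2 := (Qs_pos m hm k).1
      simp only [Qs]; push_cast at *; omega

lemma Qs_approx (m : ℤ) (α ε τ : ℝ) (hτ : τ ^ 2 + τ = 1) (hα : α = (m + τ) * ε)
    (h1 : (2 * m + 2 * τ + 1) * ε = 1) :
    ∀ l, (Qs m l : ℝ) * α - Ps m l = - (-τ) ^ l * ε ∧
      (Qs m (l + 1) : ℝ) * α - Ps m (l + 1) = - (-τ) ^ (l + 1) * ε
  | 0 => by
    simp only [Qs, Ps]; push_cast
    constructor
    · rw [hα]; linear_combination h1
    · rw [hα]; linear_combination (m : ℝ) * h1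
  | (l + 1) => by
    have := Qs_approx m α ε τ hτ hα h1 l
    refine ⟨this.2, ?_⟩
    simp only [Qs, Ps] at *; push_cast
    linear_combination this.1 + this.2 + ((-τ) ^ l * ε) * hτ

lemma Qs_best (m : ℤ) (hm : 1 ≤ m) (α ε τ : ℝ) (hτ0 : 0 < τ) (hτ : τ ^ 2 + τ = 1) (hε : 0 < ε)
    (hα : α = (m + τ) * ε) (h1 : (2 * m + 2 * τ + 1) * ε = 1) (P A : ℤ) (hP : 1 ≤ P) (l : ℕ)
    (h : |A - P * α| < τ ^ l * ε) : Qs m (l + 1) ≤ P := by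
  have key : ∀ l, ∃ s t : ℤ, P = s * Qs m l + t * Qs m (l + 1) ∧
      A = s * Ps m l + t * Ps m (l + 1) := by
    intro l
    induction l with
    | zero =>
      refine ⟨A - m * (P - 2 * A), P - 2 * A, ?_, ?_⟩ <;> simp only [Qs, Ps] <;> ring
    | succ l ih =>
      obtain ⟨s, t, e1, e2⟩ := ih
      refine ⟨t - s, s, ?_, ?_⟩
      · rw [e1]; simp only [Qs]; ring
      · rw [e2]; simp only [Ps]; ring
  obtain ⟨s, t, e1, e2⟩ := key l
  obtain ⟨a1, a2⟩ := Qs_approx m α ε τ hτ hα h1 l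
  obtain ⟨q1, q2⟩ := Qs_pos m hm l
  have e : (A : ℝ) - P * α = (-τ) ^ l * (s - t * τ) * ε := by
    rw [e1, e2]; push_cast
    linear_combination (-(s : ℝ)) * a1 - t * a2
  rw [e, abs_mul, abs_mul, abs_pow, abs_neg, abs_of_pos hτ0, abs_of_pos hε] at h
  have hp : 0 < τ ^ l := by positivity
  have h2 : |(s : ℝ) - t * τ| < 1 := by
    have : τ ^ l * ε * |(s : ℝ) - t * τ| < τ ^ l * ε * 1 := by linarith
    exact lt_of_mul_lt_mul_left this (by positivity)
  rw [abs_lt] at h2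
  rcases lt_trichotomy t 0 with ht | ht | ht
  · have : (t : ℝ) * τ < 0 := mul_neg_of_neg_of_pos (by exact_mod_cast ht) hτ0
    have hs : (s : ℝ) < 1 := by linarith
    have hs : s < 1 := by exact_mod_cast hs
    nlinarith
  · subst ht
    have hs1 : (s : ℝ) < 1 := by push_cast at h2; linarith
    have hs2 : (-1 : ℝ) < s := by push_cast at h2; linarith
    have hs1 : s < 1 := by exact_mod_cast hs1
    have hs2 : -1 < s := by exact_mod_cast hs2
    have : s = 0 := by omega
    subst this
    omega
  · have : (0 : ℝ) < (t : ℝ) * τ := mul_pos (by exact_mod_cast ht) hτ0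
    have hs : (-1 : ℝ) < s := by linarith
    have hs : -1 < s := by exact_mod_cast hs
    nlinarith

lemma arith (δ : ℕ) (m : ℤ) (hδ : 7 ≤ δ) (hm : m = (δ : ℤ) / 2) (α ε τ : ℝ) (hτ0 : 0 < τ)
    (hτ : τ ^ 2 + τ = 1) (hε : 0 < ε)
    (hα : α = (m + τ) * ε) (h1 : (2 * m + 2 * τ + 1) * ε = 1) (P A : ℤ) (hP : 1 ≤ P)
    (n : ℕ) (hn : 2 ≤ n) (c : ℤ → ℤ)
    (hc : ∀ k : ℤ, 1 ≤ k → k ≤ n + 1 → (c k : ℝ) ≤ k * α ∧ k * α ≤ c k + 1)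
    (hη : ∀ r s : ℤ, 1 ≤ r → r ≤ n + 1 → 1 ≤ s → s ≤ n + 1 →
      δ * |A - P * α| ≤ 1 - (s * α - c s) + (r * α - c r)) :
    (2 * (δ : ℝ) - 2) * n < δ * P := by
  have hm3 : 3 ≤ m := by omega
  have hm3' : (3 : ℝ) ≤ m := by exact_mod_cast hm3
  have hδ2 : (2 : ℝ) * m ≤ δ := by
    have : 2 * m ≤ δ := by omega
    exact_mod_cast this
  have hδ7 : (7 : ℝ) ≤ δ := by exact_mod_cast hδ
  have t1 : τ < 0.6181 := by nlinarith
  have t2 : 0.618 < τ := by nlinarith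
  have hε1 : ε < 1 := by nlinarith
  -- turning one-sided approximations into bounds
  have up : ∀ k p : ℤ, 1 ≤ k → k ≤ n + 1 → 0 < k * α - p → k * α - p < 1 →
      (k * α - c k : ℝ) = k * α - p := by
    intro k p k1 k2 h0 h1
    have := hc k k1 k2
    have a1 : (c k : ℝ) < p + 1 := by linarith
    have a2 : (p : ℝ) < c k + 1 := by linarith
    have a1 : c k < p + 1 := by exact_mod_cast a1
    have a2 : p < c k + 1 := by exact_mod_cast a2
    have : c k = p := by omega
    rw [this]
  have bound : ∀ r s p q : ℤ, 1 ≤ r → r ≤ n + 1 → 1 ≤ s → s ≤ n + 1 → 0 < r * α - p →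
      r * α - p < 1 → 0 < q - s * α → q - s * α < 1 →
      δ * |A - P * α| ≤ (q - s * α) + (r * α - p) := by
    intro r s p q r1 r2 s1 s2 x1 x2 y1 y2
    have a := up r p r1 r2 x1 x2
    have b := up s (q - 1) s1 s2 (by push_cast; linarith) (by push_cast; linarith)
    have := hη r s r1 r2 s1 s2
    rw [a, b] at this
    push_cast at this
    linarith
  have best := Qs_best m (by omega) α ε τ hτ0 hτ hε hα h1 P A hP
  have appr := Qs_approx m α ε τ hτ hα h1
  suffices 2 * (n : ℤ) ≤ P by
    have h3 : 2 * (n : ℝ) ≤ P := by exact_mod_cast this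
    have h4 : (2 : ℝ) ≤ n := by exact_mod_cast hn
    nlinarith
  by_cases hbig : 2 * m + 1 ≤ n + 1
  · -- golden phase
    have ex : ∃ l, 1 ≤ l ∧ Qs m l ≤ n + 1 ∧ (n : ℤ) + 1 < Qs m (l + 1) := by
      by_contra hcon
      push Not at hcon
      have : ∀ l, Qs m (l + 1) ≤ n + 1 := by
        intro l
        induction l with
        | zero => simpa [Qs] using hbig
        | succ l ih => exact hcon (l + 1) (by omega) ih
      have h5 := this (n + 2)
      have h6 := Qs_grow m (by omega) (n + 2 + 1)
      push_cast at h6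
      omega
    obtain ⟨l, l1, l2, l3⟩ := ex
    obtain ⟨l, rfl⟩ : ∃ l', l = l' + 1 := ⟨l - 1, by omega⟩
    obtain ⟨a1, a2⟩ := appr l
    have hpos := Qs_pos m (by omega) l
    have hmono : Qs m l ≤ n + 1 := by
      rcases l with _ | l
      · simp only [Qs]; omega
      · have := Qs_pos m (by omega) l
        simp only [Qs] at l2 ⊢; omega
    have hp1 : 0 < τ ^ l := by positivity
    have hp2 : τ ^ l ≤ 1 := pow_le_one₀ hτ0.le (by linarith)
    have hp3 : 0 < τ ^ l * ε := by positivity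
    have hp4 : τ ^ l * ε < 1 := by nlinarith
    have hp5 : 0 < τ ^ (l + 1) * ε := by positivity
    have hp6 : τ ^ (l + 1) * ε < 1 := by rw [pow_succ]; nlinarith
    have hb : δ * |A - P * α| ≤ τ ^ l * ε + τ ^ (l + 1) * ε := by
      rcases Nat.even_or_odd l with he | ho
      · have e1 : (-τ) ^ l = τ ^ l := he.neg_pow τ
        have e2 : (-τ) ^ (l + 1) = - τ ^ (l + 1) := he.add_one.neg_pow τ
        rw [e1] at a1; rw [e2] at a2
        have := bound (Qs m (l + 1)) (Qs m l) (Ps m (l + 1)) (Ps m l) (by omega) l2 (by omega)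
          hmono (by linarith) (by linarith) (by linarith) (by linarith)
        linarith
      · have e1 : (-τ) ^ l = - τ ^ l := ho.neg_pow τ
        have e2 : (-τ) ^ (l + 1) = τ ^ (l + 1) := ho.add_one.neg_pow τ
        rw [e1] at a1; rw [e2] at a2
        have := bound (Qs m l) (Qs m (l + 1)) (Ps m l) (Ps m (l + 1)) (by omega) hmono (by omega)
          l2 (by linarith) (by linarith) (by linarith) (by linarith)
        linarith
    have hlt : |A - P * α| < τ ^ (l + 3) * ε := by
      have h7 : 7 * |A - P * α| ≤ δ * |A - P * α| :=
        mul_le_mul_of_nonneg_right hδ7 (abs_nonneg _)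
      have h8 : 1 + τ < 7 * τ ^ 3 := by
        have : τ ^ 3 = 2 * τ - 1 := by linear_combination (τ - 1) * hτ
        rw [this]; linarith
      have h9 := mul_lt_mul_of_pos_left h8 hp3
      have e : τ ^ (l + 3) * ε = τ ^ l * ε * τ ^ 3 := by ring
      have e' : τ ^ l * ε + τ ^ (l + 1) * ε = τ ^ l * ε * (1 + τ) := by ring
      rw [e]; rw [e'] at hb; linarith
    have hfin := best (l + 3) hlt
    simp only [Qs] at hfin l3
    omega
  · -- first phase
    push Not at hbig
    obtain ⟨j, j1, j2⟩ : ∃ j : ℤ, 2 * j ≤ n ∧ (n : ℤ) ≤ 2 * j + 1 := ⟨(n : ℤ) / 2, by omega, by omega⟩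
    have hj1 : 1 ≤ j := by omega
    have hjm : j < m := by omega
    have hj1' : (1 : ℝ) ≤ j := by exact_mod_cast hj1
    have hjm' : (j : ℝ) + 1 ≤ m := by exact_mod_cast hjm
    have f1 : ((2 * j + 1 : ℤ) : ℝ) * α - (j : ℤ) = (m + τ - j) * ε := by
      push_cast; rw [hα]; linear_combination (j : ℝ) * h1
    have f2 : ((1 : ℤ) : ℝ) - ((2 : ℤ) : ℝ) * α = ε := by
      push_cast; rw [hα]; linear_combination -h1
    have hb := bound (2 * j + 1) 2 j 1 (by omega) (by omega) (by omega) (by omega)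
      (by rw [f1]; apply mul_pos _ hε; linarith) (by rw [f1]; nlinarith) (by rw [f2]; exact hε)
      (by rw [f2]; exact hε1)
    rw [f1, f2] at hb
    -- general tool
    have tool : ∀ l, m + τ - j + 1 < δ * τ ^ l → Qs m (l + 1) ≤ P := by
      intro l hl
      apply best l
      have : δ * |A - P * α| < δ * (τ ^ l * ε) := by
        calc _ ≤ (m + τ - j + 1) * ε := by linarith
          _ < (δ * τ ^ l) * ε := mul_lt_mul_of_pos_right hl hε
          _ = _ := by ring
      exact lt_of_mul_lt_mul_left this (by positivity)
    by_contra hlt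
    push Not at hlt
    have s1 : 2 * m + 1 ≤ P := by
      have := tool 0 (by rw [pow_zero]; linarith)
      simpa [Qs] using this
    have g1 : m ≤ 2 * j := by omega
    have g1' : (m : ℝ) ≤ 2 * j := by exact_mod_cast g1
    have s2 : 2 * m + 3 ≤ P := by
      have := tool 1 (by rw [pow_one]; nlinarith)
      simp only [Qs] at this; omega
    have g2 : m + 1 ≤ 2 * j := by omega
    have g2' : (m : ℝ) + 1 ≤ 2 * j := by exact_mod_cast g2
    have tt : τ ^ 2 = 1 - τ := by linarith
    have s3 := tool 2 (by
      rw [tt]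
      rcases (by omega : m = 3 ∨ m = 4 ∨ 5 ≤ m) with h | h | h
      · have : 2 ≤ j := by omega
        have : (2 : ℝ) ≤ j := by exact_mod_cast this
        rw [h]; push_cast; nlinarith
      · have : 3 ≤ j := by omega
        have : (3 : ℝ) ≤ j := by exact_mod_cast this
        rw [h] at hδ2 ⊢; push_cast at *; nlinarith
      · have : (5 : ℝ) ≤ m := by exact_mod_cast h
        nlinarith)
    simp only [Qs] at s3
    omega

/-! ### Combinatorics of the Sturmian sequence -/

lemma factorAt_length {γ : Type*} (u : ℕ → γ) (i n : ℕ) : (factorAt u i n).length = n := by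
  simp [factorAt]

lemma factorAt_eq_iff {γ : Type*} (u : ℕ → γ) (i j n : ℕ) :
    factorAt u i n = factorAt u j n ↔ ∀ k < n, u (i + k) = u (j + k) := by
  simp [factorAt, List.map_inj_left]

lemma factorAt_succ {γ : Type*} (u : ℕ → γ) (i n : ℕ) :
    factorAt u i (n + 1) = factorAt u i n ++ [u (i + n)] := by
  simp [factorAt, List.range_succ]

lemma factorSet_eq {γ : Type*} (u : ℕ → γ) (n : ℕ) :
    {x : List γ | IsFactor u x ∧ x.length = n} = Set.range (fun i => factorAt u i n) := by
  ext x
  constructor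
  · rintro ⟨⟨i, hi⟩, rfl⟩
    exact ⟨i, hi⟩
  · rintro ⟨i, rfl⟩
    refine ⟨⟨i, ?_⟩, factorAt_length u i n⟩
    rw [factorAt_length]

lemma ncard_factors (u : ℕ → Bool) (hu : Sturmian u) (n : ℕ) :
    (Set.range (fun i => factorAt u i n)).ncard = n + 1 := by
  rw [← factorSet_eq]; exact hu.2 n

lemma finite_factors (u : ℕ → Bool) (hu : Sturmian u) (n : ℕ) :
    (Set.range (fun i => factorAt u i n)).Finite :=
  Set.finite_of_ncard_pos (by rw [ncard_factors u hu]; omega)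

/-- There is a right special factor of each length. -/
lemma exists_rs (u : ℕ → Bool) (hu : Sturmian u) (M : ℕ) :
    ∃ x x', factorAt u x M = factorAt u x' M ∧ u (x + M) ≠ u (x' + M) := by
  obtain ⟨y, ⟨x, rfl⟩, y', ⟨x', rfl⟩, hne, he⟩ :=
    Set.exists_ne_map_eq_of_ncard_lt_of_maps_to
      (s := Set.range (fun i => factorAt u i (M + 1))) (t := Set.range (fun i => factorAt u i M))
      (by rw [ncard_factors u hu, ncard_factors u hu]; omega) (f := List.dropLast)
      (by
        rintro _ ⟨i, rfl⟩
        exact ⟨i, by simp [factorAt_succ]⟩) (finite_factors u hu M)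
  simp only [factorAt_succ, List.dropLast_concat] at he hne
  refine ⟨x, x', he, fun h => hne ?_⟩
  rw [he, h]

/-- The right special factor of each length is unique. -/
lemma unique_rs (u : ℕ → Bool) (hu : Sturmian u) (M x x' y y' : ℕ)
    (hx : factorAt u x M = factorAt u x' M) (hx' : u (x + M) ≠ u (x' + M))
    (hy : factorAt u y M = factorAt u y' M) (hy' : u (y + M) ≠ u (y' + M)) :
    factorAt u x M = factorAt u y M := by
  by_contra hne
  set S := Set.range (fun i => factorAt u i (M + 1)) with hS
  have hSf : S.Finite := finite_factors u hu (M + 1)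
  have hd : ∀ i, (factorAt u i (M + 1)).dropLast = factorAt u i M := by
    intro i; simp [factorAt_succ]
  have hl : ∀ i j, factorAt u i (M + 1) = factorAt u j (M + 1) →
      factorAt u i M = factorAt u j M ∧ u (i + M) = u (j + M) := by
    intro i j h
    rw [factorAt_eq_iff] at h
    exact ⟨(factorAt_eq_iff ..).2 fun k hk => h k (by omega), h M (by omega)⟩
  have hxy : factorAt u x (M + 1) ≠ factorAt u y (M + 1) := fun h => hne (hl _ _ h).1
  have hsub : Set.range (fun i => factorAt u i M) ⊆
      List.dropLast '' (S \ {factorAt u x (M + 1), factorAt u y (M + 1)}) := by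
    rintro _ ⟨i, rfl⟩
    by_cases h1 : factorAt u i (M + 1) = factorAt u x (M + 1)
    · refine ⟨factorAt u x' (M + 1), ⟨⟨x', rfl⟩, ?_⟩, ?_⟩
      · rintro (h | h)
        · exact hx' (hl _ _ h).2.symm
        · exact hne (hx.trans (hl _ _ h).1)
      · rw [hd, ← hx]; exact (hl _ _ h1).1.symm
    by_cases h2 : factorAt u i (M + 1) = factorAt u y (M + 1)
    · refine ⟨factorAt u y' (M + 1), ⟨⟨y', rfl⟩, ?_⟩, ?_⟩
      · rintro (h | h)
        · exact hne (hy.trans (hl _ _ h).1).symm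
        · exact hy' (hl _ _ h).2.symm
      · rw [hd, ← hy]; exact (hl _ _ h2).1.symm
    · refine ⟨factorAt u i (M + 1), ⟨⟨i, rfl⟩, ?_⟩, hd i⟩
      rintro (h | h)
      · exact h1 h
      · exact h2 h
  have c1 := Set.ncard_le_ncard hsub ((hSf.sdiff).image _)
  have c2 := Set.ncard_image_le (f := List.dropLast)
    (hs := hSf.sdiff (t := {factorAt u x (M + 1), factorAt u y (M + 1)}))
  have c3 : (S \ {factorAt u x (M + 1), factorAt u y (M + 1)}).ncard + 2 = M + 1 + 1 := by
    have := Set.ncard_sdiff_add_ncard_of_subset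
      (s := {factorAt u x (M + 1), factorAt u y (M + 1)}) (t := S)
      (by rintro _ (rfl | rfl); exacts [⟨x, rfl⟩, ⟨y, rfl⟩]) hSf
    rw [Set.ncard_pair hxy, hS, ncard_factors u hu] at this
    exact this
  rw [ncard_factors u hu] at c1
  omega

/-- A Sturmian sequence contains no pair `c w c`, `c' w c'` with `w` a palindrome
(position `p'` carries the right special factor `c w`). -/
lemma no_pal (u : ℕ → Bool) (hu : Sturmian u) (M p p' : ℕ) (hM : 1 ≤ M) (h0 : u p ≠ u p')
    (hmid : ∀ k, 1 ≤ k → k < M → u (p + k) = u (p' + k))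
    (hend : u (p + M) = u p)
    (hpal : ∀ k, k ≤ M → u (p + k) = u (p + (M - k)))
    (hrs : ∀ x y, factorAt u x M = factorAt u y M → u (x + M) ≠ u (y + M) →
      factorAt u x M = factorAt u p' M) : False := by
  have hnot : ∀ k, k ≤ M → factorAt u (p + k) M ≠ factorAt u p' M := by
    intro k hk h
    rw [factorAt_eq_iff] at h
    rcases Nat.eq_zero_or_pos k with rfl | hk0
    · exact h0 (by simpa using h 0 (by omega))
    rcases Nat.lt_or_ge k M with hkM | hkM
    · have e1 := h 0 (by omega)
      have e2 := h (M - k) (by omega)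
      have e3 := hmid (M - k) (by omega) (by omega)
      have e4 := hpal k hk
      have e5 : p + k + (M - k) = p + M := by omega
      rw [e5] at e2
      simp only [add_zero] at e1
      apply h0
      rw [← hend, e2, ← e3, ← e4, e1]
    · have : k = M := by omega
      subst this
      have e1 := h 0 (by omega)
      simp only [add_zero] at e1
      exact h0 (by rw [← hend, e1])
  -- pigeonhole
  have hfin := finite_factors u hu M
  obtain ⟨s, hs, t, ht, hst, he⟩ := Set.exists_ne_map_eq_of_ncard_lt_of_maps_to
    (s := Set.Iic M) (t := Set.range (fun i => factorAt u i M) \ {factorAt u p' M})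
    (f := fun k => factorAt u (p + k) M)
    (by
      rw [Set.ncard_sdiff_singleton_of_mem (Set.mem_range_self p'), ncard_factors u hu]
      rw [← Finset.coe_Iic, Set.ncard_coe_finset]
      simp)
    (fun k hk => ⟨⟨p + k, rfl⟩, hnot k hk⟩) hfin.sdiff
  simp only [Set.mem_Iic] at hs ht
  have main : ∀ s d, 0 < d → s + d ≤ M → factorAt u (p + s) M = factorAt u (p + (s + d)) M →
      False := by
    intro s d hd hsd he
    have step : ∀ x y, factorAt u x M = factorAt u y M → factorAt u x M ≠ factorAt u p' M →
        factorAt u (x + 1) M = factorAt u (y + 1) M := by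
      intro x y hxy hx
      have hlast : u (x + M) = u (y + M) := by
        by_contra hc
        exact hx (hrs x y hxy hc)
      rw [factorAt_eq_iff] at hxy ⊢
      intro k hk
      rcases Nat.lt_or_ge (k + 1) M with h | h
      · have := hxy (k + 1) h
        rw [show x + 1 + k = x + (k + 1) by omega, show y + 1 + k = y + (k + 1) by omega]
        exact this
      · rw [show x + 1 + k = x + M by omega, show y + 1 + k = y + M by omega]
        exact hlast
    have ind : ∀ k, factorAt u (p + s + k) M = factorAt u (p + s + k + d) M ∧
        factorAt u (p + s + k) M ≠ factorAt u p' M := by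
      intro k
      induction k using Nat.strong_induction_on with
      | _ k ih =>
        constructor
        · rcases Nat.eq_zero_or_pos k with rfl | hk
          · simpa [add_assoc] using he
          · obtain ⟨i1, i2⟩ := ih (k - 1) (by omega)
            have := step _ _ i1 i2
            rw [show p + s + k = p + s + (k - 1) + 1 by omega,
              show p + s + (k - 1) + 1 + d = p + s + (k - 1) + d + 1 by omega]
            exact this
        · rcases Nat.lt_or_ge k d with h | h
          · rw [add_assoc]; exact hnot (s + k) (by omega)
          · obtain ⟨i1, i2⟩ := ih (k - d) (by omega)
            rw [show p + s + k = p + s + (k - d) + d by omega, ← i1]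
            exact i2
    refine hu.1 ⟨d, hd, p + s, fun n hn => ?_⟩
    obtain ⟨i1, -⟩ := ind (n - (p + s))
    rw [show p + s + (n - (p + s)) = n by omega, factorAt_eq_iff] at i1
    have := i1 0 (by omega)
    simpa using this.symm
  rcases Nat.lt_or_ge s t with h | h
  · exact main s (t - s) (by omega) (by omega) (by rw [he]; congr 1; omega)
  · exact main t (s - t) (by omega) (by omega) (by rw [← he]; congr 1; omega)

lemma countBefore_succ (u : ℕ → Bool) (c : Bool) (n : ℕ) :
    countBefore u c (n + 1) = countBefore u c n + if u n = c then 1 else 0 := by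
  unfold countBefore
  rw [List.range_succ, List.filter_append, List.length_append]
  by_cases h : u n = c <;> simp [h]

lemma countBefore_zero (u : ℕ → Bool) (c : Bool) : countBefore u c 0 = 0 := rfl

lemma countBefore_add (u : ℕ → Bool) (n : ℕ) :
    countBefore u false n + countBefore u true n = n := by
  induction n with
  | zero => rfl
  | succ n ih =>
    rw [countBefore_succ, countBefore_succ]
    cases u n <;> simp <;> omega

lemma count_factorAt (u : ℕ → Bool) (c : Bool) (n : ℕ) :
    (factorAt u 0 n).count c = countBefore u c n := by
  induction n with
  | zero => rfl
  | succ n ih =>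
    rw [factorAt_succ, countBefore_succ, List.count_append, ih]
    simp [List.count_singleton]

/-- Sturmian sequences are balanced. -/
lemma sturmian_balanced (u : ℕ → Bool) (hu : Sturmian u) (i j n : ℕ) :
    (countBefore u false (i + n) : ℤ) - countBefore u false i ≤
      countBefore u false (j + n) - countBefore u false j + 1 := by
  by_contra hcon
  set C : ℕ → ℤ := fun n => (countBefore u false n : ℤ) with hC
  have hCs : ∀ x, C (x + 1) = C x + if u x = false then 1 else 0 := by
    intro x; simp only [hC, countBefore_succ]; push_cast; rfl
  have hex : ∃ n, ∃ i j, C (j + n) - C j + 1 < C (i + n) - C i :=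
    ⟨n, i, j, by simp only [hC]; omega⟩
  classical
  clear hcon i j n
  obtain ⟨i, j, hij⟩ := Nat.find_spec hex
  have hmin : ∀ k < Nat.find hex, ∀ i j, C (i + k) - C i ≤ C (j + k) - C j + 1 := by
    intro k hk i j
    have := Nat.find_min hex hk
    push Not at this
    exact this i j
  generalize Nat.find hex = n at hij hmin
  have hn0 : n ≠ 0 := by rintro rfl; simp at hij
  have hn1 : n ≠ 1 := by
    rintro rfl
    rw [hCs, hCs] at hij
    split_ifs at hij <;> omega
  obtain ⟨M, rfl⟩ : ∃ M, n = M + 1 := ⟨n - 1, by omega⟩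
  have hM : 1 ≤ M := by omega
  -- the difference function
  have e : ∀ k, 1 ≤ k → k ≤ M → C (i + k) - C i = C (j + k) - C j + 1 := by
    intro k h1 h2
    have a1 := hmin k (by omega) i j
    have a2 := hmin (M + 1 - k) (by omega) (i + k) (j + k)
    rw [show i + k + (M + 1 - k) = i + (M + 1) by omega,
      show j + k + (M + 1 - k) = j + (M + 1) by omega] at a2
    omega
  have elast : C (i + (M + 1)) - C i = C (j + (M + 1)) - C j + 2 := by
    have a1 := e M hM le_rfl
    have a2 := hCs (i + M)
    have a3 := hCs (j + M)
    rw [add_assoc] at a2 a3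
    split_ifs at a2 a3 <;> omega
  have ui : u i = false ∧ u j = true := by
    have a1 := e 1 le_rfl hM
    rw [hCs, hCs] at a1
    cases h1 : u i <;> cases h2 : u j <;> simp_all
  have uM : u (i + M) = false ∧ u (j + M) = true := by
    have a1 := e M hM le_rfl
    have a2 := hCs (i + M)
    have a3 := hCs (j + M)
    rw [add_assoc] at a2 a3
    cases h1 : u (i + M) <;> cases h2 : u (j + M) <;> simp [h1, h2] at a2 a3 ⊢ <;> omega
  have umid : ∀ k, 1 ≤ k → k < M → u (i + k) = u (j + k) := by
    intro k h1 h2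
    have a1 := e k h1 (by omega)
    have a4 := e (k + 1) (by omega) (by omega)
    have a2 := hCs (i + k)
    have a3 := hCs (j + k)
    rw [add_assoc] at a2 a3
    cases h1 : u (i + k) <;> cases h2 : u (j + k) <;> simp [h1, h2] at a2 a3 ⊢ <;> omega
  -- prefix / suffix counts
  have pal : ∀ k, 1 ≤ k → k ≤ M → C (i + k) - C i = C (i + (M + 1)) - C (i + (M + 1 - k)) := by
    intro k h1 h2
    have b1 := hmin k (by omega) i (j + (M + 1 - k))
    have b2 := hmin k (by omega) (i + (M + 1 - k)) j
    rw [show i + (M + 1 - k) + k = i + (M + 1) by omega] at b2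
    rw [show j + (M + 1 - k) + k = j + (M + 1) by omega] at b1
    have a1 := e k h1 h2
    have a2 := e (M + 1 - k) (by omega) (by omega)
    omega
  have hpali : ∀ k, k ≤ M → u (i + k) = u (i + (M - k)) := by
    intro k hk
    rcases Nat.eq_zero_or_pos k with rfl | h0
    · simp [ui.1, uM.1]
    rcases Nat.lt_or_ge k M with hlt | hge
    · have p1 := pal k (by omega) hk
      have p2 := pal (k + 1) (by omega) (by omega)
      have a2 := hCs (i + k)
      have a3 := hCs (i + (M - k))
      rw [add_assoc] at a2 a3
      rw [show M + 1 - (k + 1) = M - k by omega] at p2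
      rw [show M - k + 1 = M + 1 - k by omega] at a3
      cases h1 : u (i + k) <;> cases h2 : u (i + (M - k)) <;> simp [h1, h2] at a2 a3 ⊢ <;> omega
    · have : k = M := by omega
      subst this
      simp [ui.1, uM.1]
  have hpalj : ∀ k, k ≤ M → u (j + k) = u (j + (M - k)) := by
    intro k hk
    rcases Nat.eq_zero_or_pos k with rfl | h0
    · simp [ui.2, uM.2]
    rcases Nat.lt_or_ge k M with hlt | hge
    · rw [← umid k (by omega) hlt, ← umid (M - k) (by omega) (by omega)]
      exact hpali k hk
    · have : k = M := by omega
      subst this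
      simp [ui.2, uM.2]
  -- the right special factor of length `M`
  obtain ⟨z, z', hz, hz'⟩ := exists_rs u hu M
  have huniq : ∀ x y, factorAt u x M = factorAt u y M → u (x + M) ≠ u (y + M) →
      factorAt u x M = factorAt u z M := fun x y h1 h2 => unique_rs u hu M x y z z' h1 h2 hz hz'
  have hw : factorAt u (z + 1) (M - 1) = factorAt u (i + 1) (M - 1) := by
    apply unique_rs u hu (M - 1) (z + 1) (z' + 1) (i + 1) (j + 1)
    · rw [factorAt_eq_iff] at hz ⊢
      intro k hk
      have := hz (k + 1) (by omega)
      rw [show z + 1 + k = z + (k + 1) by omega, show z' + 1 + k = z' + (k + 1) by omega]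
      exact this
    · rw [show z + 1 + (M - 1) = z + M by omega, show z' + 1 + (M - 1) = z' + M by omega]
      exact hz'
    · rw [factorAt_eq_iff]
      intro k hk
      have := umid (k + 1) (by omega) (by omega)
      rw [show i + 1 + k = i + (k + 1) by omega, show j + 1 + k = j + (k + 1) by omega]
      exact this
    · rw [show i + 1 + (M - 1) = i + M by omega, show j + 1 + (M - 1) = j + M by omega, uM.1, uM.2]
      simp
  rw [factorAt_eq_iff] at hw
  cases h : u z
  · have hzi : factorAt u z M = factorAt u i M := by
      rw [factorAt_eq_iff]
      intro k hk
      rcases Nat.eq_zero_or_pos k with rfl | h0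
      · simp [h, ui.1]
      · have := hw (k - 1) (by omega)
        rw [show z + 1 + (k - 1) = z + k by omega, show i + 1 + (k - 1) = i + k by omega] at this
        exact this
    refine no_pal u hu M j i hM (by simp [ui.1, ui.2]) (fun k h1 h2 => (umid k h1 h2).symm)
      (by simp [ui.2, uM.2]) hpalj (fun x y h1 h2 => (huniq x y h1 h2).trans hzi)
  · have hzj : factorAt u z M = factorAt u j M := by
      rw [factorAt_eq_iff]
      intro k hk
      rcases Nat.eq_zero_or_pos k with rfl | h0
      · simp [h, ui.2]
      · have := hw (k - 1) (by omega)
        rw [show z + 1 + (k - 1) = z + k by omega, show i + 1 + (k - 1) = i + k by omega] at this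
        rw [this]
        exact umid k (by omega) hk
    refine no_pal u hu M i j hM (by simp [ui.1, ui.2]) umid
      (by simp [ui.1, uM.1]) hpali (fun x y h1 h2 => (huniq x y h1 h2).trans hzj)

/-- Counts of a fixed length bounded on all factors give bounds on the frequency. -/
lemma freq_bounds (u : ℕ → Bool) (ρ : ℝ) (hρ : HasFreq u false ρ) (n : ℕ) (hn : 0 < n) (lo hi : ℤ)
    (hlo : ∀ i, lo ≤ (countBefore u false (i + n) : ℤ) - countBefore u false i)
    (hhi : ∀ i, (countBefore u false (i + n) : ℤ) - countBefore u false i ≤ hi) :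
    (lo : ℝ) ≤ n * ρ ∧ n * ρ ≤ hi := by
  have hn' : (0 : ℝ) < n := by exact_mod_cast hn
  have hK : ∀ K : ℕ, K * lo ≤ (countBefore u false (K * n) : ℤ) ∧
      (countBefore u false (K * n) : ℤ) ≤ K * hi := by
    intro K
    induction K with
    | zero => simp [countBefore_zero]
    | succ K ih =>
      have h1 := hlo (K * n)
      have h2 := hhi (K * n)
      rw [show (K + 1) * n = K * n + n by ring]
      push_cast
      constructor <;> linarith [ih.1, ih.2]
  have ht : Tendsto (fun K : ℕ => n * (((factorAt u 0 ((K + 1) * n)).count false : ℝ) /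
      (((K + 1) * n : ℕ) : ℝ))) atTop (nhds (n * ρ)) := by
    apply Tendsto.const_mul
    refine Tendsto.comp (g := fun n => ((factorAt u 0 n).count false : ℝ) / n) hρ ?_
    apply tendsto_atTop_mono (f := fun K : ℕ => K) _ tendsto_id
    intro K
    show K ≤ (K + 1) * n
    nlinarith
  have he : ∀ K : ℕ, n * (((factorAt u 0 ((K + 1) * n)).count false : ℝ) /
      (((K + 1) * n : ℕ) : ℝ)) = (countBefore u false ((K + 1) * n) : ℝ) / ((K : ℝ) + 1) := by
    intro K
    rw [count_factorAt]; push_cast; field_simp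
  simp only [he] at ht
  constructor
  · refine ge_of_tendsto' ht fun K => ?_
    rw [le_div_iff₀ (by positivity)]
    have := (hK (K + 1)).1
    have : (((K + 1 : ℕ) : ℤ) * lo : ℝ) ≤ (countBefore u false ((K + 1) * n) : ℝ) := by
      exact_mod_cast this
    push_cast at this
    linarith
  · refine le_of_tendsto' ht fun K => ?_
    rw [div_le_iff₀ (by positivity)]
    have := (hK (K + 1)).2
    have : (countBefore u false ((K + 1) * n) : ℝ) ≤ (((K + 1 : ℕ) : ℤ) * hi : ℝ) := by
      exact_mod_cast this
    push_cast at this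
    linarith

/-- Discrepancy bound. -/
lemma discrepancy (u : ℕ → Bool) (hu : Sturmian u) (ρ : ℝ) (hρ : HasFreq u false ρ) (p q : ℕ) :
    ((countBefore u false p : ℝ) - p * ρ) - ((countBefore u false q : ℝ) - q * ρ) ≤ 1 := by
  have key : ∀ i n : ℕ, |((countBefore u false (i + n) : ℝ) - countBefore u false i) - n * ρ| ≤ 1 := by
    intro i n
    rcases Nat.eq_zero_or_pos n with rfl | hn
    · simp
    have := freq_bounds u ρ hρ n hn ((countBefore u false (i + n) : ℤ) - countBefore u false i - 1)
      ((countBefore u false (i + n) : ℤ) - countBefore u false i + 1)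
      (fun k => by have := sturmian_balanced u hu i k n; omega)
      (fun k => sturmian_balanced u hu k i n)
    push_cast at this
    rw [abs_le]
    constructor <;> linarith [this.1, this.2]
  rcases Nat.le_total p q with h | h
  · obtain ⟨n, rfl⟩ := Nat.exists_eq_add_of_le h
    have := abs_le.1 (key p n)
    push_cast
    linarith [this.1]
  · obtain ⟨n, rfl⟩ := Nat.exists_eq_add_of_le h
    have := abs_le.1 (key q n)
    push_cast
    linarith [this.2]

/-- Counting is determined by the factor. -/
lemma count_agree (u : ℕ → Bool) (c : Bool) (i j n : ℕ) (h : ∀ k < n, u (i + k) = u (j + k)) :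
    ∀ k ≤ n, (countBefore u c (i + k) : ℤ) - countBefore u c i =
      countBefore u c (j + k) - countBefore u c j := by
  intro k
  induction k with
  | zero => simp
  | succ k ih =>
    intro hk
    have := ih (by omega)
    rw [← add_assoc, ← add_assoc, countBefore_succ, countBefore_succ, h k (by omega)]
    push_cast
    linarith

/-- The golden tail of the continued fraction. -/
lemma golden_tail (t : ℕ → ℝ) (h : ∀ n, 0 < t n ∧ t n < 1 ∧ 1 / t n = 1 + t (n + 1)) :
    t 0 ^ 2 + t 0 = 1 := by
  set τ : ℝ := (Real.sqrt 5 - 1) / 2 with hτd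
  have h5 : Real.sqrt 5 ^ 2 = 5 := Real.sq_sqrt (by norm_num)
  have hτ : τ ^ 2 + τ = 1 := by rw [hτd]; linear_combination h5 / 4
  have hs : 2 < Real.sqrt 5 := by
    rw [Real.lt_sqrt (by norm_num)]; norm_num
  have hτ0 : 0 < τ := by rw [hτd]; linarith
  have hτ1 : τ < 1 := by nlinarith
  have step : ∀ n, |t n - τ| ≤ τ * |t (n + 1) - τ| := by
    intro n
    obtain ⟨h0, h1, h2⟩ := h n
    obtain ⟨h0', -, -⟩ := h (n + 1)
    have h3 : t n * (1 + t (n + 1)) = 1 := by rw [← h2]; field_simp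
    have h4 : (t n - τ) * (1 + t (n + 1)) = - (τ * (t (n + 1) - τ)) := by
      linear_combination h3 - hτ
    have h5 : |t n - τ| * (1 + t (n + 1)) = τ * |t (n + 1) - τ| := by
      have := congrArg abs h4
      rw [abs_mul, abs_neg, abs_mul, abs_of_pos hτ0, abs_of_pos (by linarith : 0 < 1 + t (n + 1))]
        at this
      exact this
    have := abs_nonneg (t n - τ)
    nlinarith
  have hk : ∀ k, |t 0 - τ| ≤ τ ^ k * |t k - τ| := by
    intro k
    induction k with
    | zero => simp
    | succ k ih =>
      calc _ ≤ τ ^ k * |t k - τ| := ih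
        _ ≤ τ ^ k * (τ * |t (k + 1) - τ|) := by gcongr; exact step k
        _ = _ := by ring
  have hk' : ∀ k, |t 0 - τ| ≤ τ ^ k := by
    intro k
    refine (hk k).trans ?_
    have : |t k - τ| ≤ 1 := by
      obtain ⟨h0, h1, -⟩ := h k
      rw [abs_le]; constructor <;> linarith
    have hp : 0 < τ ^ k := by positivity
    nlinarith
  have h0 : |t 0 - τ| ≤ 0 :=
    ge_of_tendsto' (tendsto_pow_atTop_nhds_zero_of_lt_one hτ0.le hτ1) hk'
  have : t 0 = τ := by
    have := abs_eq_zero.1 (le_antisymm h0 (abs_nonneg _))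
    linarith
  rw [this]; exact hτ

/-! ### The colouring -/

lemma colour_eq_iff (δ : ℕ) (u : ℕ → Bool) (p q : ℕ) :
    colourCyc δ u p = colourCyc δ u q ↔
      u p = u q ∧ (countBefore u (u p) p : ZMod δ) = (countBefore u (u p) q : ZMod δ) := by
  unfold colourCyc colour cyc
  cases h1 : u p <;> cases h2 : u q <;> simp

lemma proj_colour (δ : ℕ) (u : ℕ → Bool) (p : ℕ) : proj (colourCyc δ u p) = u p := by
  unfold colourCyc colour proj
  cases h1 : u p <;> simp

lemma occurs_iff {γ : Type*} (z : ℕ → γ) (w : List γ) (i : ℕ) :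
    OccursAt z w i ↔ ∀ k (hk : k < w.length), z (i + k) = w[k] := by
  unfold OccursAt
  constructor
  · intro h k hk
    have : (factorAt z i w.length)[k]? = w[k]? := by rw [h]
    simp [factorAt, hk] at this
    exact this
  · intro h
    apply List.ext_getElem
    · simp [factorAt]
    · intro k h1 h2
      simp [factorAt, h k h2]

lemma same_colour (δ : ℕ) (u : ℕ → Bool) (c : Bool) (p q n : ℕ)
    (h : ∀ k < n, colourCyc δ u (p + k) = colourCyc δ u (q + k)) (hc : ∃ k < n, u (p + k) = c) :
    (countBefore u c p : ZMod δ) = (countBefore u c q : ZMod δ) := by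
  have hu : ∀ k < n, u (p + k) = u (q + k) := fun k hk => ((colour_eq_iff ..).1 (h k hk)).1
  obtain ⟨k, hk, hck⟩ := hc
  have h1 := ((colour_eq_iff ..).1 (h k hk)).2
  rw [hck] at h1
  have h2 := count_agree u c p q n hu k hk.le
  have h3 := congrArg (Int.cast : ℤ → ZMod δ) h2
  push_cast at h3
  rw [h1] at h3
  exact sub_right_injective h3

/-- Core: from the binary data to the inequality. -/
lemma core (δ : ℕ) (hδ : 7 ≤ δ) (u : ℕ → Bool) (hu : Sturmian u)
    (α ε τ : ℝ) (hα : HasFreq u false α) (hτ0 : 0 < τ) (hτ : τ ^ 2 + τ = 1) (hε : 0 < ε)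
    (hαε : α = (((δ : ℤ) / 2 : ℤ) + τ) * ε) (h1 : (2 * ((δ : ℤ) / 2 : ℤ) + 2 * τ + 1) * ε = 1)
    (n : ℕ) (hn : 2 ≤ n) (p q i j : ℕ) (hp : u p = false) (hq : u q = true)
    (hpq : ∀ k < n, u (p + 1 + k) = u (q + 1 + k)) (hpi : ∀ k < n, u (p + 1 + k) = u (i + k))
    (hij' : ∀ k < n, u (i + k) = u (j + k)) (hij : i < j)
    (d1 : (countBefore u false i : ZMod δ) = countBefore u false j)
    (d2 : (countBefore u true i : ZMod δ) = countBefore u true j) :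
    (2 * (δ : ℝ) - 2) * n < j - i := by
  obtain ⟨A, hA⟩ : ∃ A : ℤ, (countBefore u false j : ℤ) - countBefore u false i = δ * A := by
    have h : (((countBefore u false i : ℤ)) : ZMod δ) = ((countBefore u false j : ℤ) : ZMod δ) := by
      push_cast; exact d1
    rw [ZMod.intCast_eq_intCast_iff_dvd_sub] at h
    exact h
  obtain ⟨B, hB⟩ : ∃ B : ℤ, (countBefore u true j : ℤ) - countBefore u true i = δ * B := by
    have h : (((countBefore u true i : ℤ)) : ZMod δ) = ((countBefore u true j : ℤ) : ZMod δ) := by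
      push_cast; exact d2
    rw [ZMod.intCast_eq_intCast_iff_dvd_sub] at h
    exact h
  have hP : (j : ℤ) - i = δ * (A + B) := by
    have e1 := countBefore_add u i
    have e2 := countBefore_add u j
    rw [mul_add, ← hA, ← hB]
    omega
  have hP1 : 1 ≤ A + B := by
    by_contra hc
    have : (δ : ℤ) * (A + B) ≤ 0 := mul_nonpos_of_nonneg_of_nonpos (by omega) (by omega)
    omega
  have hPr : (j : ℝ) - i = δ * ((A + B : ℤ) : ℝ) := by exact_mod_cast hP
  have hAr : (countBefore u false j : ℝ) - countBefore u false i = δ * (A : ℝ) := by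
    exact_mod_cast hA
  rw [hPr]
  have cp : (countBefore u false (p + 1) : ℤ) = countBefore u false p + 1 := by
    rw [countBefore_succ, hp]; simp
  have cq : (countBefore u false (q + 1) : ℤ) = countBefore u false q := by
    rw [countBefore_succ, hq]; simp
  have agp := count_agree u false (p + 1) (q + 1) n hpq
  have agi := count_agree u false (p + 1) i n hpi
  have agj := count_agree u false i j n hij'
  refine arith δ ((δ : ℤ) / 2) hδ rfl α ε τ hτ0 hτ hε hαε h1 (A + B) A hP1 n hn
    (fun k => (countBefore u false (p + k.toNat) : ℤ) - countBefore u false p - 1) ?_ ?_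
  · intro k k1 k2
    obtain ⟨k, rfl⟩ : ∃ k' : ℕ, k = k' + 1 := ⟨(k - 1).toNat, by omega⟩
    have e := agp k (by omega)
    have et : ((k : ℤ) + 1).toNat = k + 1 := by omega
    simp only [et]
    have e3 : p + 1 + k = p + (k + 1) := by omega
    have e4 : q + 1 + k = q + (k + 1) := by omega
    rw [e3, e4] at e
    have := freq_bounds u α hα (k + 1) (by omega)
      ((countBefore u false (p + (k + 1)) : ℤ) - countBefore u false p - 1)
      ((countBefore u false (p + (k + 1)) : ℤ) - countBefore u false p - 1 + 1)
      (fun x => by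
        have := sturmian_balanced u hu p x (k + 1)
        omega)
      (fun x => by
        have := sturmian_balanced u hu x q (k + 1)
        omega)
    push_cast at this ⊢
    exact this
  · intro r s r1 r2 s1 s2
    obtain ⟨r, rfl⟩ : ∃ k' : ℕ, r = k' + 1 := ⟨(r - 1).toNat, by omega⟩
    obtain ⟨s, rfl⟩ : ∃ k' : ℕ, s = k' + 1 := ⟨(s - 1).toNat, by omega⟩
    have et : ∀ k : ℕ, ((k : ℤ) + 1).toNat = k + 1 := by intro k; omega
    simp only [et]
    have hcr : ∀ k ≤ n, (countBefore u false (i + k) : ℝ) = countBefore u false i +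
        (countBefore u false (p + (k + 1)) - countBefore u false p - 1) ∧
        (countBefore u false (j + k) : ℝ) = countBefore u false j +
        (countBefore u false (p + (k + 1)) - countBefore u false p - 1) := by
      intro k hk
      have a1 := agi k hk
      have a2 := agj k hk
      rw [show p + 1 + k = p + (k + 1) by omega] at a1
      constructor
      · have : (countBefore u false (i + k) : ℤ) = countBefore u false i +
          (countBefore u false (p + (k + 1)) - countBefore u false p - 1) := by omega
        exact_mod_cast this
      · have : (countBefore u false (j + k) : ℤ) = countBefore u false j +
          (countBefore u false (p + (k + 1)) - countBefore u false p - 1) := by omega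
        exact_mod_cast this
    have x1 := discrepancy u hu α hα (j + r) (i + s)
    have x2 := discrepancy u hu α hα (i + r) (j + s)
    rw [(hcr r (by omega)).1, (hcr s (by omega)).2] at x2
    rw [(hcr r (by omega)).2, (hcr s (by omega)).1] at x1
    have hη : (δ : ℝ) * |A - ((A + B : ℤ) : ℝ) * α| =
        |(δ : ℝ) * (A - ((A + B : ℤ) : ℝ) * α)| := by
      rw [abs_mul, abs_of_nonneg (Nat.cast_nonneg δ : (0 : ℝ) ≤ (δ : ℝ))]
    have hη2 : (δ : ℝ) * (A - ((A + B : ℤ) : ℝ) * α) =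
        (countBefore u false j : ℝ) - countBefore u false i - ((j : ℝ) - i) * α := by
      rw [hAr, hPr]; ring
    rw [hη, hη2, abs_le]
    push_cast at x1 x2 ⊢
    constructor <;> linarith

theorem statement14 (δ : ℕ) (hδ : 7 ≤ δ) (u : ℕ → Bool) (hu : IsStandard u)
    (θ : ℝ) (hθ : HasSlope u θ) (a : ℕ → ℕ) (hcf : HasCF θ a)
    (ha1 : a 1 = 1) (ha2 : a 2 = δ / 2) (ha : ∀ n, 3 ≤ n → a n = 1)
    (w : List (ZMod δ ⊕ ZMod δ)) (hw : Bispecial (colourCyc δ u) w)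
    (hπa : false ∈ w.map proj) (hπb : true ∈ w.map proj)
    (v : List (ZMod δ ⊕ ZMod δ)) (hv : IsReturnWord (colourCyc δ u) w v) :
    (w.length : ℝ) / (v.length : ℝ) < 1 / (2 * (δ : ℝ) - 2) := by
  obtain ⟨hls, -⟩ := hw
  obtain ⟨x, y, hxy, ⟨p, hp⟩, ⟨q, hq⟩⟩ := hls
  obtain ⟨i, j, hij, hi, hj, -, rfl⟩ := hv
  have hS := hu.1
  -- frequencies
  obtain ⟨ρa, ρb, hfa, hfb, hlt, hθe⟩ := hθ
  have hsum : ρa + ρb = 1 := by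
    have h1 := hfa.add hfb
    refine tendsto_nhds_unique h1 ?_
    refine tendsto_const_nhds.congr' ?_
    filter_upwards [eventually_gt_atTop 0] with N hN
    have hN' : (0 : ℝ) < N := by exact_mod_cast hN
    rw [count_factorAt, count_factorAt, ← add_div, ← Nat.cast_add, countBefore_add,
      div_self hN'.ne']
  obtain ⟨t, ht0, ht⟩ := hcf
  have hgold : t 2 ^ 2 + t 2 = 1 := by
    refine golden_tail (fun n => t (n + 2)) fun n => ?_
    obtain ⟨g1, g2, g3⟩ := ht (n + 2)
    refine ⟨g1, g2, ?_⟩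
    rw [g3, ha (n + 2 + 1) (by omega)]
    push_cast; ring_nf
  obtain ⟨p0, -, e0⟩ := ht 0
  obtain ⟨p1, -, e1⟩ := ht 1
  obtain ⟨p2, -, -⟩ := ht 2
  simp only [zero_add, Nat.reduceAdd] at e0 e1
  rw [ha1, ht0] at e0
  rw [ha2] at e1
  rw [ht0] at p0
  have hcast : ((δ / 2 : ℕ) : ℝ) = (((δ : ℤ) / 2 : ℤ) : ℝ) := by
    have : ((δ / 2 : ℕ) : ℤ) = (δ : ℤ) / 2 := by omega
    rw [← this, Int.cast_natCast]
  rw [hcast] at e1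
  have hρb : ρb ≠ 0 := by
    rintro rfl
    rw [div_zero] at hθe
    exact p0.ne' hθe
  have k0 : θ * (1 + t 1) = 1 := by
    have : θ * (1 / θ) = 1 := by field_simp
    rw [e0] at this; push_cast at this; exact this
  have k1 : t 1 * ((((δ : ℤ) / 2 : ℤ) : ℝ) + t 2) = 1 := by
    rw [← e1]; field_simp
  have k2 : ρa = θ * ρb := by rw [hθe]; field_simp
  have hρb0 : 0 < ρb := by
    have : ρb * (1 + θ) = 1 := by linear_combination hsum - k2
    by_contra hc
    nlinarith
  have hρa0 : 0 < ρa := by rw [k2]; positivity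
  have k3 : ρa * (2 + t 1) = 1 := by
    rw [k2]; rw [k2] at hsum; linear_combination hsum + ρb * k0
  -- occurrences
  rw [occurs_iff] at hi hj
  have hp' := (occurs_iff _ _ _).1 hp
  have hq' := (occurs_iff _ _ _).1 hq
  have xp : colourCyc δ u p = x := hp' 0 (by simp)
  have xq : colourCyc δ u q = y := hq' 0 (by simp)
  have wp : ∀ k (hk : k < w.length), colourCyc δ u (p + 1 + k) = w[k] := by
    intro k hk
    have := hp' (k + 1) (by simpa using hk)
    rw [show p + 1 + k = p + (k + 1) by omega, this]; simp
  have wq : ∀ k (hk : k < w.length), colourCyc δ u (q + 1 + k) = w[k] := by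
    intro k hk
    have := hq' (k + 1) (by simpa using hk)
    rw [show q + 1 + k = q + (k + 1) by omega, this]; simp
  have hmem : ∀ c : Bool, ∃ k, ∃ hk : k < w.length, proj w[k] = c := by
    intro c
    have hc : c ∈ w.map proj := by cases c <;> assumption
    obtain ⟨z, hz, rfl⟩ := List.mem_map.1 hc
    obtain ⟨k, hk, rfl⟩ := List.getElem_of_mem hz
    exact ⟨k, hk, rfl⟩
  have hcont : ∀ s, (∀ k (hk : k < w.length), colourCyc δ u (s + k) = w[k]) → ∀ c : Bool,
      ∃ k < w.length, u (s + k) = c := by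
    intro s hs c
    obtain ⟨k, hk, hkc⟩ := hmem c
    refine ⟨k, hk, ?_⟩
    rw [← proj_colour δ u, hs k hk, hkc]
  have hagree : ∀ s s', (∀ k (hk : k < w.length), colourCyc δ u (s + k) = w[k]) →
      (∀ k (hk : k < w.length), colourCyc δ u (s' + k) = w[k]) →
      ∀ k < w.length, u (s + k) = u (s' + k) := by
    intro s s' h1 h2 k hk
    rw [← proj_colour δ u, ← proj_colour δ u, h1 k hk, h2 k hk]
  have hcol : ∀ s s', (∀ k (hk : k < w.length), colourCyc δ u (s + k) = w[k]) →
      (∀ k (hk : k < w.length), colourCyc δ u (s' + k) = w[k]) → ∀ c,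
      (countBefore u c s : ZMod δ) = countBefore u c s' := by
    intro s s' h1 h2 c
    exact same_colour δ u c s s' w.length (fun k hk => by rw [h1 k hk, h2 k hk]) (hcont s h1 c)
  have hlen : 2 ≤ w.length := by
    obtain ⟨k, hk, h1⟩ := hmem false
    obtain ⟨k', hk', h2⟩ := hmem true
    by_contra hc
    have e : k = k' := by omega
    subst e
    rw [h1] at h2
    exact absurd h2 (by simp)
  have hupq : u p ≠ u q := by
    intro h
    apply hxy
    rw [← xp, ← xq, colour_eq_iff]
    refine ⟨h, ?_⟩
    have := hcol (p + 1) (q + 1) wp wq (u p)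
    rw [countBefore_succ, countBefore_succ, ← h] at this
    simpa using this
  have hfinal : (2 * (δ : ℝ) - 2) * w.length < j - i := by
    have hε0 : 0 < ρa * t 1 := by positivity
    have hαε : ρa = ((((δ : ℤ) / 2 : ℤ) : ℝ) + t 2) * (ρa * t 1) := by
      linear_combination (-ρa) * k1
    have hone : (2 * (((δ : ℤ) / 2 : ℤ) : ℝ) + 2 * t 2 + 1) * (ρa * t 1) = 1 := by
      linear_combination 2 * ρa * k1 + k3
    have gen : ∀ p q, u p = false → u q = true →
        (∀ k (hk : k < w.length), colourCyc δ u (p + 1 + k) = w[k]) →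
        (∀ k (hk : k < w.length), colourCyc δ u (q + 1 + k) = w[k]) →
        (2 * (δ : ℝ) - 2) * w.length < j - i := by
      intro p q h1 h2 wp wq
      exact core δ hδ u hS ρa (ρa * t 1) (t 2) hfa p2 hgold hε0 hαε hone w.length hlen p q i j
        h1 h2 (hagree _ _ wp wq) (hagree _ _ wp hi) (hagree _ _ hi hj) hij
        (hcol i j hi hj false) (hcol i j hi hj true)
    cases h1 : u p <;> cases h2 : u q
    · exact absurd (h1.trans h2.symm) hupq
    · exact gen p q h1 h2 wp wq
    · exact gen q p h2 h1 wq wp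
    · exact absurd (h1.trans h2.symm) hupq
  have hδ' : (7 : ℝ) ≤ δ := by exact_mod_cast hδ
  have hvl : ((factorAt (colourCyc δ u) i (j - i)).length : ℝ) = j - i := by
    rw [factorAt_length, Nat.cast_sub hij.le]
  have hji : (0 : ℝ) < j - i := by
    have : (i : ℝ) < j := by exact_mod_cast hij
    linarith
  rw [hvl, div_lt_div_iff₀ hji (by linarith)]
  linarith

end BalancedCE
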